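/- For every positive integer n divisible by 4, there exists a 1-avoiding n-point set P = B ∪ R in general position (with |B| = |R| = n/2) in which every parallel set has size at most n/4 + 1. -/

import Mathlib

open Set

abbrev Pt : Type := ℝ × ℝ

/-- Signed area determinant of the triple `(p, q, r)`. -/
def det2 (p q r : Pt) : ℝ :=
  (q.1 - p.1) * (r.2 - p.2) - (q.2 - p.2) * (r.1 - p.1)

/-- `P` is in general position: no three distinct points of `P` are collinear. -/
def GenPos (P : Set Pt) : Prop :=
  ∀ p ∈ P, ∀ q ∈ P, ∀ r ∈ P, p ≠ q → p ≠ r → q ≠ r →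
    ¬ Collinear ℝ ({p, q, r} : Set Pt)

/-- `A` and `B` can be separated by a line. -/
def LineSeparated (A B : Set Pt) : Prop :=
  ∃ a b c : ℝ, (a, b) ≠ ((0 : ℝ), (0 : ℝ)) ∧
    (∀ p ∈ A, a * p.1 + b * p.2 < c) ∧ (∀ p ∈ B, c < a * p.1 + b * p.2)

/-- The line `{x | a x₁ + b x₂ = c}` determined by the triple `v = (a, b, c)`. -/
def lineSet (v : ℝ × ℝ × ℝ) : Set Pt := {x | v.1 * x.1 + v.2.1 * x.2 = v.2.2}

/-- The complement of the union of the lines of `L`. -/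
def linesCompl (L : Finset (ℝ × ℝ × ℝ)) : Set Pt := {y | ∀ v ∈ L, y ∉ lineSet v}

/-- `L` is a spoke set for `P`: a finite set of (nondegenerate) pairwise non-parallel
lines such that every unbounded connected component of the complement of their union
contains at least one point of `P`. -/
def IsSpokeSet (P : Set Pt) (L : Finset (ℝ × ℝ × ℝ)) : Prop :=
  (∀ v ∈ L, (v.1, v.2.1) ≠ ((0 : ℝ), (0 : ℝ))) ∧
  (∀ v ∈ L, ∀ u ∈ L, v ≠ u → v.1 * u.2.1 ≠ u.1 * v.2.1) ∧
  (∀ x : Pt, x ∈ linesCompl L →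
    ¬ Bornology.IsBounded (connectedComponentIn (linesCompl L) x) →
    ∃ p ∈ P, p ∈ connectedComponentIn (linesCompl L) x)

/-- `p` is strictly above the non-vertical line `y = l.1 * x + l.2`. -/
def Above (l : ℝ × ℝ) (p : Pt) : Prop := l.1 * p.1 + l.2 < p.2

/-- The two-coloured point set `B ∪ R` has a parallel set of size `k`: there are
non-vertical lines `L 0, …, L k` and subsets `B' ⊆ B` and `R' ⊆ R` of size `k` such that
the sets of points of `B'` (resp. `R'`) strictly above the lines are strictly increasing. -/
def HasParallelSet (B R : Finset Pt) (k : ℕ) : Prop :=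
  ∃ L : Fin (k + 1) → ℝ × ℝ, ∃ B' ⊆ B, ∃ R' ⊆ R, B'.card = k ∧ R'.card = k ∧
    ∀ i : Fin k,
      {p ∈ (↑B' : Set Pt) | Above (L i.castSucc) p} ⊂
        {p ∈ (↑B' : Set Pt) | Above (L i.succ) p} ∧
      {p ∈ (↑R' : Set Pt) | Above (L i.castSucc) p} ⊂
        {p ∈ (↑R' : Set Pt) | Above (L i.succ) p}

/-- `A` avoids `B`: no line through two distinct points of `A` meets the convex hull
of `B`. -/
def Avoids (A B : Set Pt) : Prop :=
  ∀ p ∈ A, ∀ q ∈ A, p ≠ q → ∀ x ∈ convexHull ℝ B, det2 p q x ≠ 0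

/-- `B ∪ R` is a colour-separable `2n`-point set. -/
def ColourSep (n : ℕ) (B R : Finset Pt) : Prop :=
  Disjoint B R ∧ B.card = n ∧ R.card = n ∧ GenPos (↑B ∪ ↑R) ∧ LineSeparated ↑B ↑R

/-- `B ∪ R` is a `1`-avoiding point set with colour classes of size `n`:
colour-separable and `B` avoids `R`. -/
def OneAvoiding (n : ℕ) (B R : Finset Pt) : Prop :=
  ColourSep n B R ∧ Avoids ↑B ↑R


/-- Blue points: on a very flat parabola opening to the left, with large `|y|`. -/
def IsBl (N : ℝ) (p : Pt) : Prop :=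
  p.1 * (36 * N ^ 4) = - p.2 ^ 2 ∧ 4 * N ^ 2 < |p.2| ∧ |p.2| ≤ 5 * N ^ 2

/-- Red points: on the parabola `y = x^2`. -/
def IsRd (N : ℝ) (p : Pt) : Prop := p.2 = p.1 ^ 2 ∧ 1 ≤ p.1 ∧ p.1 ≤ N

lemma IsBl.xneg {N : ℝ} (hN : 1 ≤ N) {p : Pt} (h : IsBl N p) : -1 < p.1 ∧ p.1 < 0 := by
  obtain ⟨h1, h2, h3⟩ := h
  have hN4 : 0 < N ^ 4 := by positivity
  have hN2 : 0 < N ^ 2 := by positivity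
  have ha : p.2 ^ 2 = |p.2| ^ 2 := (sq_abs _).symm
  have hb : |p.2| ^ 2 ≤ (5 * N ^ 2) ^ 2 := by gcongr
  have hc : 0 < |p.2| ^ 2 := by
    have : 0 < |p.2| := by linarith
    positivity
  constructor
  · by_contra hh
    push Not at hh
    nlinarith
  · by_contra hh
    push Not at hh
    nlinarith

lemma claimTop {N : ℝ} (hN : 1 ≤ N) {b r r' : Pt} {l : ℝ × ℝ} (hb : IsBl N b) (hb0 : 0 < b.2)
    (hr : IsRd N r) (hr' : IsRd N r') (h1 : ¬ Above l b) (h2 : Above l r) (h3 : ¬ Above l r') :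
    r'.1 < r.1 := by
  obtain ⟨hx1, hx2⟩ := hb.xneg hN
  obtain ⟨_, hb2, _⟩ := hb
  rw [abs_of_pos hb0] at hb2
  obtain ⟨e, p1, p2⟩ := hr
  obtain ⟨e', p1', p2'⟩ := hr'
  unfold Above at h1 h2 h3
  push Not at h1 h3
  by_contra hc
  push Not at hc
  rw [e] at h2
  rw [e'] at h3
  have hs : l.1 < 0 := by
    by_contra hs
    push Not at hs
    nlinarith [mul_nonneg hs (by linarith : 0 ≤ r.1 - b.1)]
  nlinarith [mul_nonneg (by linarith : 0 ≤ -l.1) (by linarith : 0 ≤ r'.1 - r.1)]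

lemma claimBot {N : ℝ} (hN : 1 ≤ N) {b r r' : Pt} {l : ℝ × ℝ} (hb : IsBl N b) (hb0 : b.2 < 0)
    (hr : IsRd N r) (hr' : IsRd N r') (h1 : Above l b) (h2 : Above l r) (h3 : ¬ Above l r') :
    r.1 < r'.1 := by
  obtain ⟨hx1, hx2⟩ := hb.xneg hN
  obtain ⟨_, hb2, _⟩ := hb
  rw [abs_of_neg hb0] at hb2
  obtain ⟨e, p1, p2⟩ := hr
  obtain ⟨e', p1', p2'⟩ := hr'
  unfold Above at h1 h2 h3
  push Not at h3
  by_contra hc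
  push Not at hc
  rw [e] at h2
  rw [e'] at h3
  have hne : r'.1 < r.1 := by
    rcases hc.lt_or_eq with h | h
    · exact h
    · rw [h] at h3; linarith
  have hs : l.1 < r.1 + r'.1 := by
    by_contra hs
    push Not at hs
    nlinarith [mul_nonneg (by linarith : 0 ≤ l.1 - (r.1 + r'.1)) (by linarith : 0 ≤ r.1 - r'.1)]
  have h4 : 4 * N ^ 2 < l.1 * (r'.1 - b.1) := by nlinarith
  have h5 : l.1 * (r'.1 - b.1) ≤ (2 * N) * (r'.1 - b.1) := by
    apply mul_le_mul_of_nonneg_right <;> linarith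
  nlinarith

lemma det_BRR {N : ℝ} (hN : 1 ≤ N) {b r r' : Pt} (hb : IsBl N b)
    (hr : IsRd N r) (hr' : IsRd N r') (hne : r ≠ r') : det2 b r r' ≠ 0 := by
  obtain ⟨hx1, hx2⟩ := hb.xneg hN
  obtain ⟨_, hb2, _⟩ := hb
  obtain ⟨e, p1, p2⟩ := hr
  obtain ⟨e', p1', p2'⟩ := hr'
  have hd : det2 b r r' = (r'.1 - r.1) * (r.1 * r'.1 + b.2 - b.1 * (r.1 + r'.1)) := by
    unfold det2; rw [e, e']; ring
  rw [hd]
  apply mul_ne_zero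
  · intro h
    apply hne
    have : r.1 = r'.1 := by linarith
    exact Prod.ext this (by rw [e, e', this])
  · have q1 : 0 < r.1 * r'.1 := by positivity
    have q2 : r.1 * r'.1 ≤ N * N := by gcongr
    have q3 : 0 < -b.1 * (r.1 + r'.1) := by
      apply mul_pos <;> linarith
    have q4 : -b.1 * (r.1 + r'.1) ≤ 1 * (N + N) := by
      gcongr; linarith
    rcases lt_abs.1 hb2 with h | h <;> nlinarith

lemma det_BBX {N : ℝ} (hN : 1 ≤ N) {p q x : Pt} (hp : IsBl N p) (hq : IsBl N q) (hpq : p ≠ q)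
    (hx : 1 ≤ x.1) (hx0 : 0 ≤ x.2) (hx2 : x.2 ≤ N ^ 2) : det2 p q x ≠ 0 := by
  obtain ⟨ep, lp, up⟩ := hp
  obtain ⟨eq, lq, uq⟩ := hq
  have hN4 : 0 < N ^ 4 := by positivity
  have hd : (36 * N ^ 4) * det2 p q x =
      (p.2 - q.2) * (36 * N ^ 4 * x.1 + (p.2 + q.2) * x.2 - p.2 * q.2) := by
    unfold det2
    linear_combination (q.2 - x.2) * ep + (x.2 - p.2) * eq
  intro h0
  rw [h0, mul_zero] at hd
  rcases mul_eq_zero.1 hd.symm with h | h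
  · apply hpq
    have h2 : p.2 = q.2 := by linarith
    refine Prod.ext ?_ h2
    rw [← h2] at eq
    have : p.1 * (36 * N ^ 4) = q.1 * (36 * N ^ 4) := by linarith
    exact mul_right_cancel₀ (by positivity) this
  · have a1 : |(p.2 + q.2) * x.2| ≤ (5 * N ^ 2 + 5 * N ^ 2) * N ^ 2 := by
      rw [abs_mul, abs_of_nonneg hx0]
      have := abs_add_le p.2 q.2
      gcongr
      linarith
    have a2 : |p.2 * q.2| ≤ (5 * N ^ 2) * (5 * N ^ 2) := by
      rw [abs_mul]; gcongr
    have a3 := abs_le.1 a1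
    have a4 := abs_le.1 a2
    nlinarith

lemma det_BBB {N : ℝ} (hN : 1 ≤ N) {p q r : Pt} (hp : IsBl N p) (hq : IsBl N q) (hr : IsBl N r)
    (hpq : p ≠ q) (hpr : p ≠ r) (hqr : q ≠ r) : det2 p q r ≠ 0 := by
  have inj : ∀ a b : Pt, IsBl N a → IsBl N b → a ≠ b → a.2 - b.2 ≠ 0 := by
    rintro a b ⟨ea, _⟩ ⟨eb, _⟩ hab h
    apply hab
    have h2 : a.2 = b.2 := by linarith
    refine Prod.ext ?_ h2
    rw [← h2] at eb
    have : a.1 * (36 * N ^ 4) = b.1 * (36 * N ^ 4) := by linarith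
    exact mul_right_cancel₀ (by positivity) this
  have hd : (36 * N ^ 4) * det2 p q r = (p.2 - q.2) * (p.2 - r.2) * (r.2 - q.2) := by
    unfold det2
    linear_combination (q.2 - r.2) * hp.1 + (r.2 - p.2) * hq.1 + (p.2 - q.2) * hr.1
  intro h0
  rw [h0, mul_zero] at hd
  have := mul_ne_zero (mul_ne_zero (inj p q hp hq hpq) (inj p r hp hr hpr)) (inj r q hr hq hqr.symm)
  apply this
  linarith

lemma det_RRR {N : ℝ} {p q r : Pt} (hp : IsRd N p) (hq : IsRd N q) (hr : IsRd N r)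
    (hpq : p ≠ q) (hpr : p ≠ r) (hqr : q ≠ r) : det2 p q r ≠ 0 := by
  have inj : ∀ a b : Pt, IsRd N a → IsRd N b → a ≠ b → a.1 - b.1 ≠ 0 := by
    rintro a b ⟨ea, _⟩ ⟨eb, _⟩ hab h
    apply hab
    have h2 : a.1 = b.1 := by linarith
    exact Prod.ext h2 (by rw [ea, eb, h2])
  have hd : det2 p q r = (p.1 - q.1) * (p.1 - r.1) * (r.1 - q.1) * (-1) * (-1) := by
    unfold det2
    rw [hp.1, hq.1, hr.1]; ring
  rw [hd]
  have := mul_ne_zero (mul_ne_zero (inj p q hp hq hpq) (inj p r hp hr hpr)) (inj r q hr hq hqr.symm)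
  simpa using this

lemma det_of_collinear {p q r : Pt} (h : Collinear ℝ ({p, q, r} : Set Pt)) : det2 p q r = 0 := by
  rw [collinear_iff_of_mem (p₀ := p) (by simp)] at h
  obtain ⟨v, hv⟩ := h
  obtain ⟨a, ha⟩ := hv q (by simp)
  obtain ⟨b, hb⟩ := hv r (by simp)
  rw [ha, hb]
  simp [det2]
  ring

lemma IsRd.box {N : ℝ} (hN : 1 ≤ N) {x : Pt} (h : IsRd N x) :
    1 ≤ x.1 ∧ 0 ≤ x.2 ∧ x.2 ≤ N ^ 2 := by
  obtain ⟨e, a, b⟩ := h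
  refine ⟨a, ?_, ?_⟩
  · rw [e]; positivity
  · rw [e]; gcongr

lemma genPos_of {N : ℝ} (hN : 1 ≤ N) {P : Set Pt} (h : ∀ p ∈ P, IsBl N p ∨ IsRd N p) :
    GenPos P := by
  intro p hp q hq r hr hpq hpr hqr hcol
  have h0 := det_of_collinear hcol
  have c1 : det2 p r q = 0 := by unfold det2 at *; linarith
  have c2 : det2 q r p = 0 := by unfold det2 at *; linarith
  have c3 : det2 q p r = 0 := by unfold det2 at *; linarith
  have c4 : det2 r p q = 0 := by unfold det2 at *; linarith
  rcases h p hp with hp | hp <;> rcases h q hq with hq | hq <;> rcases h r hr with hr | hr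
  · exact det_BBB hN hp hq hr hpq hpr hqr h0
  · obtain ⟨a, b, c⟩ := hr.box hN
    exact det_BBX hN hp hq hpq a b c h0
  · obtain ⟨a, b, c⟩ := hq.box hN
    exact det_BBX hN hp hr hpr a b c c1
  · exact det_BRR hN hp hq hr hqr h0
  · obtain ⟨a, b, c⟩ := hp.box hN
    exact det_BBX hN hq hr hqr a b c c2
  · exact det_BRR hN hq hp hr hpr c3
  · exact det_BRR hN hr hp hq hpq c4
  · exact det_RRR hp hq hr hpq hpr hqr h0

lemma avoids_of {N : ℝ} (hN : 1 ≤ N) {B R : Set Pt} (hB : ∀ p ∈ B, IsBl N p)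
    (hR : ∀ p ∈ R, IsRd N p) : Avoids B R := by
  intro p hp q hq hpq x hx
  have hsub : convexHull ℝ R ⊆ Set.Ici (1 : ℝ) ×ˢ Set.Icc (0 : ℝ) (N ^ 2) := by
    apply convexHull_min
    · intro y hy
      obtain ⟨a, b, c⟩ := (hR y hy).box hN
      exact ⟨a, b, c⟩
    · exact (convex_Ici _).prod (convex_Icc _ _)
  obtain ⟨a, b, c⟩ := hsub hx
  exact det_BBX hN (hB p hp) (hB q hq) hpq a b c

lemma fin_growth {k : ℕ} (f : Fin (k + 1) → ℕ) (hf : ∀ i : Fin k, f i.castSucc < f i.succ)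
    (i : ℕ) : ∀ (d : ℕ) (h : i + d < k + 1), f ⟨i, by omega⟩ + d ≤ f ⟨i + d, h⟩ := by
  intro d
  induction d with
  | zero => intro h; simp
  | succ d ih =>
    intro h
    have h1 := ih (by omega)
    have h2 := hf ⟨i + d, by omega⟩
    simp only [Fin.castSucc_mk, Fin.succ_mk] at h2
    have : i + (d + 1) = i + d + 1 := by omega
    simp only [this]
    omega

lemma parallel_le {N : ℝ} (hN : 1 ≤ N) {m : ℕ} {T U R : Finset Pt}
    (hT : ∀ p ∈ T, IsBl N p ∧ 0 < p.2) (hU : ∀ p ∈ U, IsBl N p ∧ p.2 < 0)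
    (hR : ∀ p ∈ R, IsRd N p) (cT : T.card ≤ m) (cU : U.card ≤ m) (k : ℕ)
    (h : HasParallelSet (T ∪ U) R k) : k ≤ m + 1 := by
  classical
  obtain ⟨L, B', hB', R', hR', cB, cR, hs⟩ := h
  by_contra hk
  push Not at hk
  obtain ⟨q, rfl⟩ : ∃ q, k = q + 2 := ⟨k - 2, by omega⟩
  set S : Fin (q + 2 + 1) → Finset Pt := fun j => B'.filter (fun p => Above (L j) p) with hS
  set V : Fin (q + 2 + 1) → Finset Pt := fun j => R'.filter (fun p => Above (L j) p) with hV
  have hSs : ∀ i : Fin (q + 2), S i.castSucc ⊂ S i.succ := by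
    intro i
    rw [← Finset.coe_ssubset]
    simpa [hS] using (hs i).1
  have hVs : ∀ i : Fin (q + 2), V i.castSucc ⊂ V i.succ := by
    intro i
    rw [← Finset.coe_ssubset]
    simpa [hV] using (hs i).2
  have hVm : StrictMono V := Fin.strictMono_iff_lt_succ.2 hVs
  let a : Fin (q + 2 + 1) := ⟨1, by omega⟩
  let z : Fin (q + 2 + 1) := ⟨q + 1, by omega⟩
  have haz : a ≤ z := by rw [Fin.le_def]; change 1 ≤ q + 1; omega
  obtain ⟨r, hr, -⟩ := Finset.exists_of_ssubset (hVs ⟨0, by omega⟩)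
  obtain ⟨r', hr', hr'z⟩ := Finset.exists_of_ssubset (hVs ⟨q + 1, by omega⟩)
  change r ∈ V a at hr
  change r' ∉ V z at hr'z
  have hrz : r ∈ V z := hVm.monotone haz hr
  have hr'a : r' ∉ V a := fun h => hr'z (hVm.monotone haz h)
  simp only [hV, Finset.mem_filter] at hr hr' hrz hr'z hr'a
  have rR := hR r (hR' hr.1)
  have rR' := hR r' (hR' hr'.1)
  have na : ¬ Above (L a) r' := fun h => hr'a ⟨hr'.1, h⟩
  have nz : ¬ Above (L z) r' := fun h => hr'z ⟨hr'.1, h⟩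
  have g := fin_growth (fun j => (S j).card) (fun i => Finset.card_lt_card (hSs i))
  have g1 := g 0 (q + 1) (by omega)
  have g2 := g 1 (q + 1) (by omega)
  have e1 : (⟨0 + (q + 1), by omega⟩ : Fin (q + 2 + 1)) = z := by simp [z]
  have g3 : (S ⟨1 + (q + 1), by omega⟩).card ≤ q + 2 :=
    (Finset.card_le_card (Finset.filter_subset _ _)).trans cB.le
  simp only [e1] at g1
  have g4 : q + 1 ≤ (S z).card := by omega
  have g5 : (S a).card ≤ 1 := by
    change (S a).card + (q + 1) ≤ _ at g2
    omega
  by_cases hz : S z ⊆ T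
  · have := Finset.card_le_card hz
    omega
  by_cases hw : B' \ S a ⊆ U
  · have h1 := Finset.card_le_card hw
    have h2 := Finset.le_card_sdiff (S a) B'
    omega
  obtain ⟨b, hb, hbT⟩ := Finset.not_subset.1 hz
  obtain ⟨t, ht, htU⟩ := Finset.not_subset.1 hw
  simp only [hS, Finset.mem_filter, Finset.mem_sdiff] at hb ht
  have hbU : b ∈ U := by
    rcases Finset.mem_union.1 (hB' hb.1) with h | h
    · exact absurd h hbT
    · exact h
  have htT : t ∈ T := by
    rcases Finset.mem_union.1 (hB' ht.1) with h | h
    · exact h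
    · exact absurd h htU
  have k1 := claimTop hN (hT t htT).1 (hT t htT).2 rR rR' (fun h => ht.2 ⟨ht.1, h⟩) hr.2 na
  have k2 := claimBot hN (hU b hbU).1 (hU b hbU).2 rR rR' hb.2 hrz.2 nz
  linarith

theorem exists_oneAvoiding_parallelSet_le
    (n : ℕ) (hn : 0 < n) (h4 : 4 ∣ n) :
    ∃ B R : Finset Pt, OneAvoiding (n / 2) B R ∧
      ∀ k : ℕ, HasParallelSet B R k → k ≤ n / 4 + 1 := by
  classical
  obtain ⟨m, rfl⟩ := h4
  have hm : 1 ≤ m := by omega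
  have hm' : (1 : ℝ) ≤ m := by exact_mod_cast hm
  set N : ℝ := 2 * m with hNdef
  have hN : 1 ≤ N := by rw [hNdef]; linarith
  let bp : ℝ → Pt := fun t => (-t ^ 2 / (36 * N ^ 4), t)
  let T : Finset Pt := (Finset.range m).image (fun i : ℕ => bp (4 * N ^ 2 + 1 + i))
  let U : Finset Pt := (Finset.range m).image (fun i : ℕ => bp (-(4 * N ^ 2 + 1 + i)))
  let R : Finset Pt := (Finset.range (2 * m)).image (fun i : ℕ => ((i + 1 : ℝ), (i + 1 : ℝ) ^ 2))
  have hbp : ∀ t : ℝ, 4 * N ^ 2 < |t| → |t| ≤ 5 * N ^ 2 → IsBl N (bp t) := by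
    intro t h1 h2
    refine ⟨?_, h1, h2⟩
    simp only [bp]
    have : N ≠ 0 := by positivity
    field_simp
  have bound : ∀ i < m, 4 * N ^ 2 + 1 + (i : ℝ) ≤ 5 * N ^ 2 := by
    intro i hi
    have : (i : ℝ) + 1 ≤ m := by exact_mod_cast hi
    rw [hNdef]
    nlinarith
  have hT : ∀ p ∈ T, IsBl N p ∧ 0 < p.2 := by
    intro p hp
    obtain ⟨i, hi, rfl⟩ := Finset.mem_image.1 hp
    have h1 := bound i (Finset.mem_range.1 hi)
    have h2 : 0 < 4 * N ^ 2 + 1 + (i : ℝ) := by positivity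
    refine ⟨hbp _ ?_ ?_, h2⟩
    · rw [abs_of_pos h2]
      have : (0 : ℝ) ≤ i := by positivity
      linarith
    · rw [abs_of_pos h2]; exact h1
  have hU : ∀ p ∈ U, IsBl N p ∧ p.2 < 0 := by
    intro p hp
    obtain ⟨i, hi, rfl⟩ := Finset.mem_image.1 hp
    have h1 := bound i (Finset.mem_range.1 hi)
    have h2 : 0 < 4 * N ^ 2 + 1 + (i : ℝ) := by positivity
    refine ⟨hbp _ ?_ ?_, neg_lt_zero.2 h2⟩
    · rw [abs_neg, abs_of_pos h2]
      have : (0 : ℝ) ≤ i := by positivity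
      linarith
    · rw [abs_neg, abs_of_pos h2]; exact h1
  have hR : ∀ p ∈ R, IsRd N p := by
    intro p hp
    obtain ⟨i, hi, rfl⟩ := Finset.mem_image.1 hp
    have : (i : ℝ) + 1 ≤ 2 * m := by exact_mod_cast Finset.mem_range.1 hi
    refine ⟨rfl, ?_, this⟩
    have : (0 : ℝ) ≤ i := by positivity
    simpa using this
  have hB : ∀ p ∈ T ∪ U, IsBl N p := by
    intro p hp
    rcases Finset.mem_union.1 hp with h | h
    · exact (hT p h).1
    · exact (hU p h).1
  have cT : T.card = m := by
    rw [Finset.card_image_of_injective, Finset.card_range]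
    intro i j hij
    have := congrArg Prod.snd hij
    simpa [bp] using this
  have cU : U.card = m := by
    rw [Finset.card_image_of_injective, Finset.card_range]
    intro i j hij
    have := congrArg Prod.snd hij
    simp only [bp, neg_inj, add_right_inj] at this
    exact_mod_cast this
  have cR : R.card = 2 * m := by
    rw [Finset.card_image_of_injective, Finset.card_range]
    intro i j hij
    have := congrArg Prod.fst hij
    simpa using this
  have dTU : Disjoint T U := by
    rw [Finset.disjoint_left]
    intro p h1 h2
    linarith [(hT p h1).2, (hU p h2).2]
  have e1 : 4 * m / 2 = 2 * m := by omega
  have e2 : 4 * m / 4 = m := by omega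
  rw [e1, e2]
  refine ⟨T ∪ U, R, ⟨⟨?_, ?_, cR, ?_, ?_⟩, ?_⟩, ?_⟩
  · rw [Finset.disjoint_left]
    intro p h1 h2
    linarith [((hB p h1).xneg hN).2, (hR p h2).2.1]
  · rw [Finset.card_union_of_disjoint dTU, cT, cU]; ring
  · apply genPos_of hN
    rintro p (hp | hp)
    · exact Or.inl (hB p hp)
    · exact Or.inr (hR p hp)
  · refine ⟨1, 0, 1 / 2, by simp, ?_, ?_⟩
    · intro p hp
      linarith [((hB p hp).xneg hN).2]
    · intro p hp
      linarith [(hR p hp).2.1]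
  · exact avoids_of hN hB hR
  · exact parallel_le hN hT hU hR cT.le cU.le
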